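/- The words 00 and 11 each have frequency √5/10 in the sequence T: the limit as x → ∞ of (1/x)·#{N < x : T(N) = 0 and T(N+1) = 0} equals √5/10, and the limit as x → ∞ of (1/x)·#{N < x : T(N) = 1 and T(N+1) = 1} equals √5/10. -/

import Mathlib

/-- The golden mean φ = (1+√5)/2. -/
noncomputable def phi : ℝ := (1 + Real.sqrt 5) / 2

/-- `d : ℤ → ℕ` is a base-phi expansion of `N`: finitely supported, digits at most 1,
no two consecutive digits equal 1, and `∑ d i * φ^i = N`. -/
def IsBasePhi (N : ℕ) (d : ℤ → ℕ) : Prop :=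
  {i : ℤ | d i ≠ 0}.Finite ∧ (∀ i, d i ≤ 1) ∧ (∀ i, d i * d (i + 1) = 0) ∧
    ∑' i : ℤ, (d i : ℝ) * phi ^ i = (N : ℝ)

/-- The Lucas numbers: L 0 = 2, L 1 = 1, L (n+2) = L (n+1) + L n. -/
def Lucas : ℕ → ℕ
  | 0 => 2
  | 1 => 1
  | n + 2 => Lucas (n + 1) + Lucas n

/-- The sum of the digits of a (finitely supported) digit function. -/
noncomputable def digitSum (d : ℤ → ℕ) : ℕ := ∑' i : ℤ, d i

/-- The Lucas numbers of even index. -/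
def lucasEven (n : ℕ) : ℕ := Lucas (2 * n)

/-- The Lucas numbers of odd index. -/
def lucasOdd (n : ℕ) : ℕ := Lucas (2 * n + 1)

lemma lucasEven_zero : lucasEven 0 = 2 := rfl

lemma lucasOdd_zero : lucasOdd 0 = 1 := rfl

lemma lucasEven_succ (n : ℕ) : lucasEven (n + 1) = lucasEven n + lucasOdd n := by
  show Lucas (2 * n + 1) + Lucas (2 * n) = _
  rw [lucasEven, lucasOdd, add_comm]

lemma lucasOdd_succ (n : ℕ) : lucasOdd (n + 1) = lucasEven n + 2 * lucasOdd n := by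
  have h : lucasOdd (n + 1) = lucasEven (n + 1) + lucasOdd n := rfl
  rw [h, lucasEven_succ]; ring

lemma two_le_lucasEven (n : ℕ) : 2 ≤ lucasEven n := by
  induction n with
  | zero => exact le_rfl
  | succ n ih => rw [lucasEven_succ]; omega

lemma one_le_lucasOdd (n : ℕ) : 1 ≤ lucasOdd n := by
  induction n with
  | zero => exact le_rfl
  | succ n ih => rw [lucasOdd_succ]; omega

lemma lucasOdd_le_two_mul_lucasEven (n : ℕ) : lucasOdd n ≤ 2 * lucasEven n := by
  cases n with
  | zero => decide
  | succ n => rw [lucasOdd_succ, lucasEven_succ]; omega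

lemma pow_le_lucasOdd (n : ℕ) : (5 / 2 : ℝ) ^ n ≤ lucasOdd n := by
  induction n with
  | zero => simp [lucasOdd_zero]
  | succ n ih =>
    have h : (lucasOdd n : ℝ) ≤ 2 * lucasEven n := by
      exact_mod_cast lucasOdd_le_two_mul_lucasEven n
    rw [lucasOdd_succ, pow_succ]
    push_cast
    linarith

lemma exists_le_lucasOdd (x : ℕ) : ∃ n, x ≤ lucasOdd n := by
  obtain ⟨n, hn⟩ := pow_unbounded_of_one_lt (x : ℝ) (show (1 : ℝ) < 5 / 2 by norm_num)
  exact ⟨n, by exact_mod_cast hn.le.trans (pow_le_lucasOdd n)⟩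

lemma phi_pos : 0 < phi := by unfold phi; positivity

lemma phi_sq : phi ^ 2 = phi + 1 := by
  unfold phi
  nlinarith [Real.sq_sqrt (show (0 : ℝ) ≤ 5 by norm_num)]

lemma phi_zpow_rec {i j k : ℤ} (hj : j = i + 1) (hk : k = i + 2) :
    phi ^ k = phi ^ j + phi ^ i := by
  have h0 := phi_pos.ne'
  subst hj hk
  rw [zpow_add₀ h0, zpow_add₀ h0, zpow_one]
  have : phi ^ (2 : ℤ) = phi + 1 := by exact_mod_cast phi_sq
  rw [this]; ring

lemma lucas_eq_phi (n : ℕ) :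
    (lucasEven n : ℝ) = phi ^ (2 * n : ℤ) + phi ^ (-(2 * n) : ℤ) ∧
    (lucasOdd n : ℝ) = phi ^ (2 * n + 1 : ℤ) - phi ^ (-(2 * n) - 1 : ℤ) := by
  induction n with
  | zero =>
    have h := phi_zpow_rec (i := -1) (j := 0) (k := 1) (by norm_num) (by norm_num)
    simp only [lucasEven_zero, lucasOdd_zero]
    norm_num at h ⊢
    linarith
  | succ n ih =>
    obtain ⟨h1, h2⟩ := ih
    rw [lucasEven_succ, lucasOdd_succ]
    push_cast
    rw [h1, h2]
    have a1 := phi_zpow_rec (i := 2 * n) (j := 2 * n + 1) (k := 2 * (n + 1)) (by ring) (by ring)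
    have a2 := phi_zpow_rec (i := 2 * n + 1) (j := 2 * (n + 1)) (k := 2 * (n + 1) + 1)
      (by ring) (by ring)
    have a3 := phi_zpow_rec (i := -(2 * (n + 1))) (j := -(2 * n) - 1) (k := -(2 * n))
      (by ring) (by ring)
    have a4 := phi_zpow_rec (i := -(2 * (n + 1)) - 1) (j := -(2 * (n + 1))) (k := -(2 * n) - 1)
      (by ring) (by ring)
    constructor <;> linarith

/-- `S` is the set of positions of the digits 1 in the base-phi expansion of `N`. -/
def IsPhiSupport (N : ℕ) (S : Finset ℤ) : Prop :=
  (∀ i ∈ S, i + 1 ∉ S) ∧ ∑ i ∈ S, phi ^ i = N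

lemma IsPhiSupport.parity {T : ℕ → ℕ}
    (hT : ∀ (N : ℕ) (d : ℤ → ℕ), IsBasePhi N d → T N = digitSum d % 2)
    {N : ℕ} {S : Finset ℤ} (h : IsPhiSupport N S) : T N = S.card % 2 := by
  have hd : IsBasePhi N (fun i => if i ∈ S then 1 else 0) := by
    refine ⟨S.finite_toSet.subset ?_, ?_, ?_, ?_⟩
    · intro i hi
      by_contra hc
      simp_all
    · intro i
      dsimp only
      split_ifs <;> simp
    · intro i
      have := h.1 i
      by_cases hi : i ∈ S <;> simp_all
    · rw [tsum_eq_sum (s := S), ← h.2]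
      · exact Finset.sum_congr rfl fun i hi => by simp [hi]
      · intro i hi
        simp [hi]
  rw [hT N _ hd, digitSum, tsum_eq_sum (s := S)]
  · simp
  · intro i hi
    simp [hi]

/-- `S` gives the expansion of `k` and lies in the window `[-2 * n, 2 * n]`. -/
def HasWindow (n : ℕ) (k : ℕ) (S : Finset ℤ) : Prop :=
  IsPhiSupport k S ∧ ∀ i ∈ S, -(2 * n : ℤ) ≤ i ∧ i ≤ 2 * n

/-- The expansion of `N` has extreme positions `2 * n + 1` and `-(2 * n + 2)` and `S` in between. -/
def HasCore (n : ℕ) (N : ℕ) (S : Finset ℤ) : Prop :=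
  (∀ i ∈ S, i + 1 ∉ S) ∧ (∀ i ∈ S, -(2 * n : ℤ) + 1 ≤ i ∧ i ≤ 2 * n - 1) ∧
    ∑ i ∈ S, phi ^ i + phi ^ (2 * n + 1 : ℤ) + phi ^ (-(2 * n) - 2 : ℤ) = N

lemma notMem_of_bounds {S : Finset ℤ} {a b j : ℤ} (h : ∀ i ∈ S, a ≤ i ∧ i ≤ b)
    (hj : j < a ∨ b < j) : j ∉ S := fun hm => by have := h j hm; omega

lemma HasCore.support {n N : ℕ} {S : Finset ℤ} (h : HasCore n N S) :
    ∃ S', IsPhiSupport N S' ∧ S'.card = S.card + 2 ∧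
      ∀ i ∈ S', -(2 * n : ℤ) - 2 ≤ i ∧ i ≤ 2 * n + 1 := by
  obtain ⟨h1, h2, h3⟩ := h
  have m1 : (-(2 * n) - 2 : ℤ) ∉ S := notMem_of_bounds h2 (by omega)
  have m2 : (2 * n + 1 : ℤ) ∉ insert (-(2 * n) - 2 : ℤ) S := by
    rw [Finset.mem_insert, not_or]
    exact ⟨by omega, notMem_of_bounds h2 (by omega)⟩
  refine ⟨insert (2 * n + 1 : ℤ) (insert (-(2 * n) - 2 : ℤ) S), ⟨?_, ?_⟩, ?_, ?_⟩
  · intro i hi hi1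
    simp only [Finset.mem_insert] at hi hi1
    have k1 := h1 i
    have k2 := h2 i
    have k3 := h2 (i + 1)
    grind
  · rw [Finset.sum_insert m2, Finset.sum_insert m1, ← h3]; ring
  · rw [Finset.card_insert_of_notMem m2, Finset.card_insert_of_notMem m1]
  · intro i hi
    simp only [Finset.mem_insert] at hi
    have k2 := h2 i
    grind

lemma HasCore.add_lucasEven {n N : ℕ} {S : Finset ℤ} (h : HasCore n N S) :
    ∃ S', HasCore (n + 1) (N + lucasEven (n + 1)) S' ∧ S'.card = S.card + 1 := by
  obtain ⟨h1, h2, h3⟩ := h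
  have m1 : (-(2 * n) - 1 : ℤ) ∉ S := notMem_of_bounds h2 (by omega)
  refine ⟨insert (-(2 * n) - 1 : ℤ) S, ⟨?_, ?_, ?_⟩, Finset.card_insert_of_notMem m1⟩
  · intro i hi hi1
    simp only [Finset.mem_insert] at hi hi1
    have k1 := h1 i
    have k2 := h2 i
    have k3 := h2 (i + 1)
    grind
  · intro i hi
    simp only [Finset.mem_insert] at hi
    have k2 := h2 i
    push_cast
    grind
  · rw [Finset.sum_insert m1]
    push_cast
    rw [(lucas_eq_phi (n + 1)).1, ← h3]
    push_cast
    have a1 := phi_zpow_rec (i := 2 * n + 1) (j := 2 * (n + 1)) (k := 2 * (n + 1) + 1)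
      (by ring) (by ring)
    have a3 := phi_zpow_rec (i := -(2 * (n + 1)) - 1) (j := -(2 * (n + 1))) (k := -(2 * n) - 1)
      (by ring) (by ring)
    have a4 := phi_zpow_rec (i := -(2 * (n + 1)) - 2) (j := -(2 * (n + 1)) - 1)
      (k := -(2 * (n + 1))) (by ring) (by ring)
    have a5 : (-(2 * n) - 2 : ℤ) = -(2 * (n + 1)) := by ring
    rw [a5]
    linarith

lemma HasCore.add_lucasOdd {n N : ℕ} {S : Finset ℤ} (h : HasCore n N S) :
    ∃ S', HasCore (n + 1) (N + lucasOdd (n + 1)) S' ∧ S'.card = S.card + 1 := by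
  obtain ⟨h1, h2, h3⟩ := h
  have m1 : (2 * n + 1 : ℤ) ∉ S := notMem_of_bounds h2 (by omega)
  refine ⟨insert (2 * n + 1 : ℤ) S, ⟨?_, ?_, ?_⟩, Finset.card_insert_of_notMem m1⟩
  · intro i hi hi1
    simp only [Finset.mem_insert] at hi hi1
    have k1 := h1 i
    have k2 := h2 i
    have k3 := h2 (i + 1)
    grind
  · intro i hi
    simp only [Finset.mem_insert] at hi
    have k2 := h2 i
    push_cast
    grind
  · rw [Finset.sum_insert m1]
    push_cast
    rw [(lucas_eq_phi (n + 1)).2, ← h3]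
    push_cast
    have a4 := phi_zpow_rec (i := -(2 * (n + 1)) - 2) (j := -(2 * (n + 1)) - 1)
      (k := -(2 * n) - 2) (by ring) (by ring)
    linarith

lemma HasWindow.add_lucasEven {n k : ℕ} {S : Finset ℤ} (h : HasWindow n k S) :
    ∃ S', HasWindow (n + 1) (lucasEven (n + 1) + k) S' ∧ S'.card = S.card + 2 := by
  obtain ⟨⟨h1, h3⟩, h2⟩ := h
  have m1 : (-(2 * (n + 1)) : ℤ) ∉ S := notMem_of_bounds h2 (by omega)
  have m2 : (2 * (n + 1) : ℤ) ∉ insert (-(2 * (n + 1)) : ℤ) S := by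
    rw [Finset.mem_insert, not_or]
    exact ⟨by omega, notMem_of_bounds h2 (by omega)⟩
  refine ⟨insert (2 * (n + 1) : ℤ) (insert (-(2 * (n + 1)) : ℤ) S), ⟨⟨?_, ?_⟩, ?_⟩, ?_⟩
  · intro i hi hi1
    simp only [Finset.mem_insert] at hi hi1
    have k1 := h1 i
    have k2 := h2 i
    have k3 := h2 (i + 1)
    grind
  · rw [Finset.sum_insert m2, Finset.sum_insert m1, h3]
    push_cast
    rw [(lucas_eq_phi (n + 1)).1]
    push_cast
    ring
  · intro i hi
    simp only [Finset.mem_insert] at hi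
    have k2 := h2 i
    push_cast
    grind
  · rw [Finset.card_insert_of_notMem m2, Finset.card_insert_of_notMem m1]

lemma HasWindow.core {n k : ℕ} {S : Finset ℤ} (h : HasWindow n k S) :
    ∃ S', HasCore (n + 2) (lucasOdd (n + 2) + lucasEven (n + 1) + k) S' ∧
      S'.card = S.card + 2 := by
  obtain ⟨⟨h1, h3⟩, h2⟩ := h
  have m1 : (-(2 * n) - 3 : ℤ) ∉ S := notMem_of_bounds h2 (by omega)
  have m2 : (2 * (n + 1) : ℤ) ∉ insert (-(2 * n) - 3 : ℤ) S := by
    rw [Finset.mem_insert, not_or]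
    exact ⟨by omega, notMem_of_bounds h2 (by omega)⟩
  refine ⟨insert (2 * (n + 1) : ℤ) (insert (-(2 * n) - 3 : ℤ) S), ⟨?_, ?_, ?_⟩, ?_⟩
  · intro i hi hi1
    simp only [Finset.mem_insert] at hi hi1
    have k1 := h1 i
    have k2 := h2 i
    have k3 := h2 (i + 1)
    grind
  · intro i hi
    simp only [Finset.mem_insert] at hi
    have k2 := h2 i
    push_cast
    grind
  · rw [Finset.sum_insert m2, Finset.sum_insert m1, h3]
    push_cast
    rw [(lucas_eq_phi (n + 1)).1, (lucas_eq_phi (n + 2)).2]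
    push_cast
    have a1 := phi_zpow_rec (i := -(2 * (n + 2))) (j := -(2 * n) - 3) (k := -(2 * (n + 1)))
      (by ring) (by ring)
    have a2 := phi_zpow_rec (i := -(2 * (n + 2)) - 2) (j := -(2 * (n + 2)) - 1)
      (k := -(2 * (n + 2))) (by ring) (by ring)
    linarith
  · rw [Finset.card_insert_of_notMem m2, Finset.card_insert_of_notMem m1]

lemma exists_expansions (n : ℕ) :
    (∀ k ≤ lucasOdd n, ∃ S, HasWindow n k S) ∧
    (∀ N, lucasOdd n < N → N < lucasEven (n + 1) → ∃ S, HasCore n N S) ∧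
    (∀ N, lucasOdd (n + 1) < N → N < lucasEven (n + 2) → ∃ S, HasCore (n + 1) N S) := by
  have e (m : ℕ) := lucasEven_succ m
  have o (m : ℕ) := lucasOdd_succ m
  induction n with
  | zero =>
    have core2 : HasCore 0 2 ∅ := by
      have a1 := phi_zpow_rec (i := -1) (j := 0) (k := 1) (by norm_num) (by norm_num)
      have a2 := phi_zpow_rec (i := -2) (j := -1) (k := 0) (by norm_num) (by norm_num)
      refine ⟨by simp, by simp, ?_⟩
      norm_num at a1 a2 ⊢
      linarith
    have e0 := lucasEven_zero
    have o0 := lucasOdd_zero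
    have e1 := e 0
    have e2 := e 1
    have o1 := o 0
    simp only [zero_add, Nat.reduceAdd] at *
    refine ⟨fun k hk => ?_, fun N h1 h2 => ?_, fun N h1 h2 => ?_⟩
    · have : k = 0 ∨ k = 1 := by omega
      rcases this with rfl | rfl
      · exact ⟨∅, by simp [HasWindow, IsPhiSupport]⟩
      · exact ⟨{0}, by simp [HasWindow, IsPhiSupport]⟩
    · obtain rfl : N = 2 := by omega
      exact ⟨∅, core2⟩
    · have : N = 2 + lucasEven 1 ∨ N = 2 + lucasOdd 1 := by omega
      rcases this with rfl | rfl
      · obtain ⟨S, hS, -⟩ := core2.add_lucasEven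
        exact ⟨S, hS⟩
      · obtain ⟨S, hS, -⟩ := core2.add_lucasOdd
        exact ⟨S, hS⟩
  | succ n ih =>
    obtain ⟨hw, hc, hc1⟩ := ih
    have e1 := e n
    have e2 := e (n + 1)
    have e3 := e (n + 2)
    have o1 := o n
    have o2 := o (n + 1)
    simp only [add_assoc, Nat.reduceAdd] at e1 e2 e3 o1 o2
    refine ⟨fun k hk => ?_, hc1, fun N h1 h2 => ?_⟩
    · rcases le_or_gt k (lucasOdd n) with h | h
      · obtain ⟨S, hS, hb⟩ := hw k h
        refine ⟨S, hS, fun i hi => ?_⟩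
        have := hb i hi
        push_cast
        omega
      · rcases lt_or_ge k (lucasEven (n + 1)) with h' | h'
        · obtain ⟨S, hS⟩ := hc k h h'
          obtain ⟨S', hS', -, hb⟩ := hS.support
          refine ⟨S', hS', fun i hi => ?_⟩
          have := hb i hi
          push_cast
          omega
        · obtain ⟨j, rfl⟩ := Nat.exists_eq_add_of_le h'
          obtain ⟨S, hS⟩ := hw j (by omega)
          obtain ⟨S', hS', -⟩ := hS.add_lucasEven
          exact ⟨S', hS'⟩
    · simp only [add_assoc, Nat.reduceAdd] at h1 h2
      rcases lt_or_ge N (lucasOdd (n + 2) + lucasEven (n + 1)) with h | h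
      · obtain ⟨j, rfl⟩ := Nat.exists_eq_add_of_le' (show lucasEven (n + 2) ≤ N by omega)
        obtain ⟨S, hS⟩ := hc1 j (by omega) (by omega)
        obtain ⟨S', hS', -⟩ := hS.add_lucasEven
        exact ⟨S', hS'⟩
      · rcases le_or_gt N (lucasOdd (n + 2) + lucasOdd (n + 1)) with h' | h'
        · obtain ⟨j, rfl⟩ := Nat.exists_eq_add_of_le h
          obtain ⟨S, hS⟩ := hw j (by omega)
          obtain ⟨S', hS', -⟩ := hS.core
          exact ⟨S', hS'⟩
        · obtain ⟨j, rfl⟩ := Nat.exists_eq_add_of_le' (show lucasOdd (n + 2) ≤ N by omega)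
          obtain ⟨S, hS⟩ := hc1 j (by omega) (by omega)
          obtain ⟨S', hS', -⟩ := hS.add_lucasOdd
          exact ⟨S', hS'⟩

lemma parity_lt_two {T : ℕ → ℕ}
    (hT : ∀ (N : ℕ) (d : ℤ → ℕ), IsBasePhi N d → T N = digitSum d % 2) (N : ℕ) : T N < 2 := by
  obtain ⟨n, hn⟩ := exists_le_lucasOdd N
  obtain ⟨S, hS⟩ := (exists_expansions n).1 N hn
  rw [hS.1.parity hT]
  exact Nat.mod_lt _ two_pos

/-- The self-similarity of the sign sequence `(-1)^(digit sum)` of the base-phi expansion. -/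
structure PhiSign (s : ℕ → ℝ) : Prop where
  abs_eq : ∀ N, |s N| = 1
  zero : s 0 = 1
  one : s 1 = -1
  two : s 2 = 1
  even : ∀ n k, k ≤ lucasOdd n → s (lucasEven (n + 1) + k) = s k
  left : ∀ n k, 0 < k → k < lucasEven n → s (lucasOdd (n + 1) + k) = -s (lucasOdd n + k)
  middle : ∀ n k, k ≤ lucasOdd n → s (lucasOdd (n + 2) + lucasEven (n + 1) + k) = s k
  right : ∀ n k, 0 < k → k < lucasEven n →
    s (lucasOdd (n + 1) + lucasOdd n + k) = -s (lucasOdd n + k)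

lemma phiSign_of_parity {T : ℕ → ℕ}
    (hT : ∀ (N : ℕ) (d : ℤ → ℕ), IsBasePhi N d → T N = digitSum d % 2) :
    PhiSign fun N => (-1 : ℝ) ^ T N := by
  have key {N : ℕ} {S : Finset ℤ} (h : IsPhiSupport N S) :
      (-1 : ℝ) ^ T N = (-1) ^ S.card := by
    rw [h.parity hT, ← neg_one_pow_eq_pow_mod_two]
  have keyCore {n N : ℕ} {S : Finset ℤ} (h : HasCore n N S) :
      (-1 : ℝ) ^ T N = (-1) ^ S.card := by
    obtain ⟨S', hS', hcard, -⟩ := h.support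
    rw [key hS', hcard, pow_add]; norm_num
  constructor
  · intro N
    simp
  · simpa using key (N := 0) (S := ∅) (by simp [IsPhiSupport])
  · simpa using key (N := 1) (S := {0}) (by simp [IsPhiSupport])
  · obtain ⟨S, hS⟩ := (exists_expansions 0).2.1 2 (by decide) (by decide)
    have : S = ∅ := by
      refine Finset.eq_empty_of_forall_notMem fun i hi => ?_
      have := hS.2.1 i hi
      push_cast at this
      omega
    simpa [this] using keyCore hS
  · intro n k hk
    obtain ⟨S, hS⟩ := (exists_expansions n).1 k hk
    obtain ⟨S', hS', hcard⟩ := hS.add_lucasEven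
    simp only [key hS.1, key hS'.1, hcard, pow_add]; norm_num
  · intro n k h0 hk
    obtain ⟨S, hS⟩ := (exists_expansions n).2.1 (lucasOdd n + k) (by omega)
      (by rw [lucasEven_succ]; omega)
    obtain ⟨S', hS', hcard⟩ := hS.add_lucasEven
    have : lucasOdd (n + 1) + k = lucasOdd n + k + lucasEven (n + 1) := by
      rw [lucasOdd_succ, lucasEven_succ]; ring
    simp only [this, keyCore hS, keyCore hS', hcard, pow_add]; norm_num
  · intro n k hk
    obtain ⟨S, hS⟩ := (exists_expansions n).1 k hk
    obtain ⟨S', hS', hcard⟩ := hS.core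
    simp only [key hS.1, keyCore hS', hcard, pow_add]; norm_num
  · intro n k h0 hk
    obtain ⟨S, hS⟩ := (exists_expansions n).2.1 (lucasOdd n + k) (by omega)
      (by rw [lucasEven_succ]; omega)
    obtain ⟨S', hS', hcard⟩ := hS.add_lucasOdd
    have : lucasOdd (n + 1) + lucasOdd n + k = lucasOdd n + k + lucasOdd (n + 1) := by ring
    simp only [this, keyCore hS, keyCore hS', hcard, pow_add]; norm_num

/-- Two sums agree when the summands agree off the end points and the end points balance. -/
lemma sum_range_eq_of_interior {u v : ℕ → ℝ} {m : ℕ} (hm : 2 ≤ m)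
    (h : ∀ j, 0 < j → j + 1 < m → u j = v j) (he : u 0 + u (m - 1) = v 0 + v (m - 1)) :
    ∑ j ∈ Finset.range m, u j = ∑ j ∈ Finset.range m, v j := by
  obtain ⟨k, rfl⟩ := Nat.exists_eq_add_of_le' hm
  have he' : u 0 + u (k + 1) = v 0 + v (k + 1) := he
  have hs : ∑ j ∈ Finset.range k, u (j + 1) = ∑ j ∈ Finset.range k, v (j + 1) :=
    Finset.sum_congr rfl fun j hj => h _ (by omega) (by have := Finset.mem_range.1 hj; omega)
  rw [Finset.sum_range_succ, Finset.sum_range_succ', Finset.sum_range_succ,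
    Finset.sum_range_succ', hs]
  linarith

lemma abs_sum_range_sub_le {u v : ℕ → ℝ} {m y : ℕ} (hy : y ≤ m)
    (h : ∀ j, 0 < j → j + 1 < m → u j = v j) (hb : ∀ j, |u j - v j| ≤ 4) :
    |∑ j ∈ Finset.range y, u j - ∑ j ∈ Finset.range y, v j| ≤ 8 := by
  have hz : ∀ z, z + 1 ≤ m → |∑ j ∈ Finset.range z, u j - ∑ j ∈ Finset.range z, v j| ≤ 4 := by
    intro z hz
    rw [← Finset.sum_sub_distrib]
    cases z with
    | zero => simp
    | succ z =>
      rw [Finset.sum_range_succ', Finset.sum_eq_zero, zero_add]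
      · exact hb 0
      · intro j hj
        rw [h _ (by omega) (by have := Finset.mem_range.1 hj; omega), sub_self]
  cases y with
  | zero => simp
  | succ z =>
    rw [Finset.sum_range_succ, Finset.sum_range_succ]
    have h1 := abs_le.1 (hz z hy)
    have h2 := abs_le.1 (hb z)
    rw [abs_le]
    constructor <;> linarith

/-- A bounded sequence which is self-similar along Lucas intervals up to the end points. -/
structure SelfSimilar (g : ℕ → ℝ) (σ : ℝ) : Prop where
  sign : |σ| = 1
  bound : ∀ N, |g N| ≤ 2
  even : ∀ n j, j < lucasOdd n → g (lucasEven (n + 1) + j) = g j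
  left : ∀ n j, 0 < j → j + 1 < lucasEven n →
    g (lucasOdd (n + 1) + j) = σ * g (lucasOdd n + j)
  middle : ∀ n j, j < lucasOdd n → g (lucasOdd (n + 2) + lucasEven (n + 1) + j) = g j
  right : ∀ n j, 0 < j → j + 1 < lucasEven n →
    g (lucasOdd (n + 1) + lucasOdd n + j) = σ * g (lucasOdd n + j)

/-- The sum of `g` over the `y` integers starting at `a`. -/
def blockSum (g : ℕ → ℝ) (a y : ℕ) : ℝ := ∑ j ∈ Finset.range y, g (a + j)

lemma blockSum_add (g : ℕ → ℝ) (a y z : ℕ) :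
    blockSum g a (y + z) = blockSum g a y + blockSum g (a + y) z := by
  simp only [blockSum, Finset.sum_range_add, add_assoc]

lemma abs_blockSum_le {g : ℕ → ℝ} (h : ∀ N, |g N| ≤ 2) (a y : ℕ) :
    |blockSum g a y| ≤ 2 * y := by
  refine (Finset.abs_sum_le_sum_abs _ _).trans ?_
  refine (Finset.sum_le_sum fun j _ => h (a + j)).trans ?_
  simp [mul_comm]

namespace SelfSimilar

variable {g : ℕ → ℝ} {σ : ℝ}

lemma blockSum_even (hg : SelfSimilar g σ) {n y : ℕ} (hy : y ≤ lucasOdd n) :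
    blockSum g (lucasEven (n + 1)) y = blockSum g 0 y :=
  Finset.sum_congr rfl fun j hj => by
    rw [hg.even n j (by have := Finset.mem_range.1 hj; omega), zero_add]

lemma blockSum_middle (hg : SelfSimilar g σ) {n y : ℕ} (hy : y ≤ lucasOdd n) :
    blockSum g (lucasOdd (n + 2) + lucasEven (n + 1)) y = blockSum g 0 y :=
  Finset.sum_congr rfl fun j hj => by
    rw [hg.middle n j (by have := Finset.mem_range.1 hj; omega), zero_add]

lemma abs_blockSum_shift_le (hg : SelfSimilar g σ) {a b m y : ℕ} (hy : y ≤ m)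
    (h : ∀ j, 0 < j → j + 1 < m → g (a + j) = σ * g (b + j)) :
    |blockSum g a y| ≤ |blockSum g b y| + 8 := by
  have hb : ∀ j, |g (a + j) - σ * g (b + j)| ≤ 4 := fun j => by
    have h1 := hg.bound (a + j)
    have h2 := hg.bound (b + j)
    have h3 := abs_sub (g (a + j)) (σ * g (b + j))
    rw [abs_mul, hg.sign] at h3
    linarith
  have h1 := abs_sum_range_sub_le (u := fun j => g (a + j)) (v := fun j => σ * g (b + j)) hy h hb
  rw [← Finset.mul_sum] at h1
  change |blockSum g a y - σ * blockSum g b y| ≤ 8 at h1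
  have h2 := abs_sub_abs_le_abs_sub (blockSum g a y) (σ * blockSum g b y)
  rw [abs_mul, hg.sign] at h2
  linarith

/-- Exponential bounds at the Lucas numbers propagate to all partial sums. -/
lemma exists_bound (hg : SelfSimilar g σ) {r K : ℝ} (hr : 2 ≤ r)
    (hp : ∀ n, |blockSum g 0 (lucasOdd n)| ≤ K * r ^ n)
    (ha : ∀ n, |blockSum g (lucasOdd n) (lucasEven n)| ≤ K * r ^ n) :
    ∃ D : ℝ, ∀ n, ∀ x ≤ lucasOdd n, |blockSum g 0 x| ≤ D * r ^ n := by
  have hK : 0 ≤ K := by simpa using (abs_nonneg _).trans (hp 0)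
  set D := 2 * K * r + 16 + 2 * K with hD
  have hKr : 0 ≤ K * r := by positivity
  have hD0 : 16 ≤ D := by linarith
  have step : ∀ n, D * r ^ n + 2 * K * r ^ (n + 1) + 2 * K * r ^ n + 16 ≤ D * r ^ (n + 1) := by
    intro n
    have h1 : 1 ≤ r ^ n := one_le_pow₀ (by linarith)
    have h2 : 0 ≤ D * r ^ n * (r - 2) := by
      have : 0 ≤ r - 2 := by linarith
      positivity
    rw [pow_succ]
    have h3 : D * r ^ n = 2 * K * (r ^ n * r) + 16 * r ^ n + 2 * K * r ^ n := by rw [hD]; ring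
    linarith
  have e (m : ℕ) := lucasEven_succ m
  have o (m : ℕ) := lucasOdd_succ m
  have main : ∀ n, (∀ x ≤ lucasOdd n, |blockSum g 0 x| ≤ D * r ^ n) ∧
      (∀ y ≤ lucasEven n, |blockSum g (lucasOdd n) y| ≤ D * r ^ n) ∧
      (∀ y ≤ lucasEven (n + 1), |blockSum g (lucasOdd (n + 1)) y| ≤ D * r ^ (n + 1)) := by
    intro n
    induction n with
    | zero =>
      have small : ∀ a y, y ≤ 3 → |blockSum g a y| ≤ D := by
        intro a y hy
        have h1 := abs_blockSum_le hg.bound a y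
        have h2 : (y : ℝ) ≤ 3 := by exact_mod_cast hy
        linarith
      have h1 : lucasOdd 0 = 1 := rfl
      have h2 : lucasEven 0 = 2 := rfl
      have h3 : lucasEven (0 + 1) = 3 := rfl
      refine ⟨fun x hx => ?_, fun y hy => ?_, fun y hy => ?_⟩
      · simpa using small 0 x (by omega)
      · simpa using small _ y (by omega)
      · have h4 := small (lucasOdd (0 + 1)) y (by omega)
        have h5 : 0 ≤ D * (r - 1) := mul_nonneg (by linarith) (by linarith)
        rw [zero_add, pow_one]
        rw [zero_add] at h4
        linarith
    | succ n ih =>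
      obtain ⟨ih1, ih2, ih3⟩ := ih
      have s1 := step n
      have s2 := step (n + 1)
      have pos1 : 0 ≤ K * r ^ n := by positivity
      have pos2 : 0 ≤ K * r ^ (n + 1) := by positivity
      have pos3 : 0 ≤ K * r ^ (n + 1 + 1) := by positivity
      have mono : K * r ^ n ≤ K * r ^ (n + 1) :=
        mul_le_mul_of_nonneg_left (pow_le_pow_right₀ (by linarith) (Nat.le_succ n)) hK
      refine ⟨fun x hx => ?_, ih3, fun y hy => ?_⟩
      · have e1 := e n
        have o1 := o n
        rcases le_total x (lucasOdd n) with h | h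
        · have := ih1 x h
          linarith
        · rcases le_total x (lucasEven (n + 1)) with h' | h'
          · obtain ⟨y, rfl⟩ := Nat.exists_eq_add_of_le h
            have h1 := ih2 y (by omega)
            have h2 := hp n
            rw [blockSum_add, zero_add]
            have := abs_add_le (blockSum g 0 (lucasOdd n)) (blockSum g (lucasOdd n) y)
            linarith
          · obtain ⟨y, rfl⟩ := Nat.exists_eq_add_of_le h'
            have h1 := ih1 y (by omega)
            have h2 := hp n
            have h3 := ha n
            rw [blockSum_add, zero_add, hg.blockSum_even (by omega), e1, add_comm (lucasEven n),
              blockSum_add, zero_add]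
            have := abs_add_three (blockSum g 0 (lucasOdd n))
              (blockSum g (lucasOdd n) (lucasEven n)) (blockSum g 0 y)
            linarith
      · have e2 := e (n + 1)
        have o1 := o n
        have e1 := e n
        have l (y : ℕ) (hy : y ≤ lucasEven (n + 1)) :=
          hg.abs_blockSum_shift_le hy (hg.left (n + 1))
        have rr (y : ℕ) (hy : y ≤ lucasEven (n + 1)) :=
          hg.abs_blockSum_shift_le hy (hg.right (n + 1))
        have hfull := l _ le_rfl
        have ha1 := ha (n + 1)
        have hp0 := hp n
        rcases le_total y (lucasEven (n + 1)) with h | h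
        · have h1 := l y h
          have h2 := ih3 y h
          linarith
        · rcases le_total y (lucasOdd (n + 1)) with h' | h'
          · obtain ⟨z, rfl⟩ := Nat.exists_eq_add_of_le h
            have h1 := ih1 z (by omega)
            rw [blockSum_add, hg.blockSum_middle (n := n) (by omega)]
            have h4 := abs_add_le
              (blockSum g (lucasOdd (n + 1 + 1)) (lucasEven (n + 1))) (blockSum g 0 z)
            linarith
          · obtain ⟨z, rfl⟩ := Nat.exists_eq_add_of_le h'
            have h1 := ih3 z (by omega)
            have h2 := rr z (by omega)
            have h3 : blockSum g (lucasOdd (n + 1 + 1)) (lucasOdd (n + 1)) =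
                blockSum g (lucasOdd (n + 1 + 1)) (lucasEven (n + 1)) +
                  blockSum g 0 (lucasOdd n) := by
              rw [show lucasOdd (n + 1) = lucasEven (n + 1) + lucasOdd n by omega,
                blockSum_add, hg.blockSum_middle (n := n) le_rfl]
            rw [blockSum_add, h3]
            have := abs_add_three
              (blockSum g (lucasOdd (n + 1 + 1)) (lucasEven (n + 1))) (blockSum g 0 (lucasOdd n))
              (blockSum g (lucasOdd (n + 1 + 1) + lucasOdd (n + 1)) z)
            linarith
  exact ⟨D, fun n => (main n).1⟩

end SelfSimilar

lemma tendsto_div_of_bound {G : ℕ → ℝ} {D : ℝ}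
    (h : ∀ n, ∀ x ≤ lucasOdd n, |G x| ≤ D * (9 / 4) ^ n) :
    Filter.Tendsto (fun x : ℕ => G x / x) Filter.atTop (nhds 0) := by
  have hlim : Filter.Tendsto (fun n : ℕ => D * (9 / 4) * (9 / 10 : ℝ) ^ n) Filter.atTop
      (nhds 0) := by
    simpa using (tendsto_pow_atTop_nhds_zero_of_lt_one (r := (9 / 10 : ℝ)) (by norm_num)
      (by norm_num)).const_mul (D * (9 / 4))
  have mono : Monotone lucasOdd := monotone_nat_of_le_succ fun n => by
    rw [lucasOdd_succ]; omega
  rw [Metric.tendsto_atTop] at hlim ⊢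
  intro ε hε
  obtain ⟨n₀, hn₀⟩ := hlim ε hε
  refine ⟨lucasOdd n₀ + 1, fun x hx => ?_⟩
  classical
  obtain ⟨n, hn, hmin⟩ : ∃ n, x ≤ lucasOdd n ∧ ∀ m < n, ¬ x ≤ lucasOdd m :=
    ⟨Nat.find (exists_le_lucasOdd x), Nat.find_spec (exists_le_lucasOdd x),
      fun m hm => Nat.find_min (exists_le_lucasOdd x) hm⟩
  have hlt : n₀ < n := by
    by_contra hc
    have := mono (not_lt.1 hc)
    omega
  obtain ⟨k, rfl⟩ := Nat.exists_eq_add_of_lt hlt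
  have hk := hmin (n₀ + k) (by omega)
  have hxk : (5 / 2 : ℝ) ^ (n₀ + k) ≤ x :=
    (pow_le_lucasOdd _).trans (by exact_mod_cast (not_le.1 hk).le)
  have hx0 : (0 : ℝ) < x := lt_of_lt_of_le (by positivity) hxk
  have hG := h _ x hn
  have hD : 0 ≤ D := by simpa using (abs_nonneg _).trans (h 0 0 (Nat.zero_le _))
  have hd := hn₀ (n₀ + k) (by omega)
  rw [Real.dist_eq, sub_zero, abs_of_nonneg (by positivity)] at hd
  rw [Real.dist_eq, sub_zero, abs_div, abs_of_pos hx0, div_lt_iff₀ hx0]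
  calc |G x| ≤ D * (9 / 4) ^ (n₀ + k + 1) := hG
    _ = D * (9 / 4) * (9 / 10) ^ (n₀ + k) * (5 / 2) ^ (n₀ + k) := by
      rw [mul_assoc, ← mul_pow]; norm_num [pow_succ]; ring
    _ ≤ D * (9 / 4) * (9 / 10) ^ (n₀ + k) * x := by gcongr
    _ < ε * x := by gcongr

lemma SelfSimilar.blockSum_lucasOdd_succ {g : ℕ → ℝ} {σ : ℝ} (hg : SelfSimilar g σ) (n : ℕ) :
    blockSum g 0 (lucasOdd (n + 1)) =
      2 * blockSum g 0 (lucasOdd n) + blockSum g (lucasOdd n) (lucasEven n) := by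
  have h : lucasOdd (n + 1) = lucasOdd n + lucasEven n + lucasOdd n := by
    rw [lucasOdd_succ]; ring
  rw [h, blockSum_add, blockSum_add, zero_add, zero_add, add_comm (lucasOdd n) (lucasEven n),
    ← lucasEven_succ, hg.blockSum_even le_rfl]
  ring

lemma SelfSimilar.blockSum_interval_succ {g : ℕ → ℝ} {σ : ℝ} (hg : SelfSimilar g σ) (n : ℕ) :
    blockSum g (lucasOdd (n + 2)) (lucasEven (n + 2)) =
      blockSum g (lucasOdd (n + 2)) (lucasEven (n + 1)) + blockSum g 0 (lucasOdd n) +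
        blockSum g (lucasOdd (n + 2) + lucasOdd (n + 1)) (lucasEven (n + 1)) := by
  have h : lucasEven (n + 2) = lucasEven (n + 1) + lucasOdd n + lucasEven (n + 1) := by
    rw [lucasEven_succ (n + 1), lucasOdd_succ, lucasEven_succ]; ring
  have h' : lucasOdd (n + 1) = lucasEven (n + 1) + lucasOdd n := rfl
  rw [h, blockSum_add, blockSum_add, hg.blockSum_middle le_rfl, h']

namespace PhiSign

variable {s : ℕ → ℝ}

lemma odd (hs : PhiSign s) (n : ℕ) : s (lucasOdd n) = -1 := by
  induction n with
  | zero => exact hs.one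
  | succ n ih => exact (hs.even n _ le_rfl).trans ih

lemma even_eq_one (hs : PhiSign s) (n : ℕ) : s (lucasEven (n + 1)) = 1 :=
  (hs.even n 0 (Nat.zero_le _)).trans hs.zero

lemma odd_add_odd (hs : PhiSign s) (n : ℕ) : s (lucasOdd (n + 2) + lucasOdd (n + 1)) = -1 := by
  have h' : lucasOdd (n + 2) + lucasOdd (n + 1) =
      lucasOdd (n + 2) + lucasEven (n + 1) + lucasOdd n := (add_assoc _ _ _).symm
  rw [h', hs.middle n _ le_rfl, hs.odd]

lemma selfSimilar (hs : PhiSign s) : SelfSimilar s (-1) where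
  sign := by simp
  bound N := by rw [hs.abs_eq]; norm_num
  even n j hj := hs.even n j hj.le
  left n j h0 hj := by rw [hs.left n j h0 (by omega), neg_one_mul]
  middle n j hj := hs.middle n j hj.le
  right n j h0 hj := by rw [hs.right n j h0 (by omega), neg_one_mul]

lemma blockSum_reflect {a b m : ℕ} (hm : 1 ≤ m) (ha : s a = -1) (hb : s b = -1)
    (h : ∀ j, 0 < j → j < m → s (a + j) = -s (b + j)) :
    blockSum s a m = -blockSum s b m - 2 := by
  obtain ⟨k, rfl⟩ := Nat.exists_eq_add_of_le' hm
  have hsum : ∑ j ∈ Finset.range k, s (a + (j + 1)) =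
      -∑ j ∈ Finset.range k, s (b + (j + 1)) := by
    rw [← Finset.sum_neg_distrib]
    exact Finset.sum_congr rfl fun j hj =>
      h _ (by omega) (by have := Finset.mem_range.1 hj; omega)
  rw [blockSum, blockSum, Finset.sum_range_succ', Finset.sum_range_succ', hsum, add_zero, add_zero,
    ha, hb]
  ring

lemma blockSum_interval (hs : PhiSign s) (n : ℕ) :
    blockSum s (lucasOdd (n + 2)) (lucasEven (n + 2)) =
      -2 * blockSum s (lucasOdd (n + 1)) (lucasEven (n + 1)) + blockSum s 0 (lucasOdd n) - 4 := by
  have hm := two_le_lucasEven (n + 1)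
  rw [hs.selfSimilar.blockSum_interval_succ,
    blockSum_reflect (by omega) (hs.odd _) (hs.odd (n + 1)) (hs.left (n + 1)),
    blockSum_reflect (by omega) (hs.odd_add_odd n) (hs.odd (n + 1)) (hs.right (n + 1))]
  ring

lemma initial_values (hs : PhiSign s) :
    s 3 = 1 ∧ s 4 = -1 ∧ s 5 = -1 ∧ s 6 = -1 ∧ s 7 = 1 := by
  have h5 := hs.left 0 1 one_pos (by decide)
  have h6 := hs.right 0 1 one_pos (by decide)
  change s 5 = -s 2 at h5
  change s 6 = -s 2 at h6
  rw [hs.two] at h5 h6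
  exact ⟨hs.even_eq_one 0, hs.odd 1, h5, h6, hs.even_eq_one 1⟩

lemma abs_blockSum_lucasOdd_le (hs : PhiSign s) (n : ℕ) :
    |blockSum s 0 (lucasOdd n)| ≤ 4 * (9 / 4) ^ n := by
  have hp := hs.selfSimilar.blockSum_lucasOdd_succ
  have ha := hs.blockSum_interval
  obtain ⟨h3, h4, h5, h6, -⟩ := hs.initial_values
  have p0 : blockSum s 0 (lucasOdd 0) = 1 := by
    rw [lucasOdd_zero]
    simp [blockSum, hs.zero]
  have a0 : blockSum s (lucasOdd 0) (lucasEven 0) = 0 := by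
    rw [lucasOdd_zero, lucasEven_zero]
    simp [blockSum, Finset.sum_range_succ, hs.one, hs.two]
  have a1 : blockSum s (lucasOdd 1) (lucasEven 1) = -3 := by
    rw [show lucasOdd 1 = 4 from rfl, show lucasEven 1 = 3 from rfl]
    simp [blockSum, Finset.sum_range_succ, h4, h5, h6]
    norm_num
  suffices h : |blockSum s 0 (lucasOdd n)| ≤ 4 * (9 / 4) ^ n ∧
      |blockSum s 0 (lucasOdd (n + 1))| ≤ 4 * (9 / 4) ^ (n + 1) ∧
      |blockSum s 0 (lucasOdd (n + 2))| ≤ 4 * (9 / 4) ^ (n + 2) from h.1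
  induction n with
  | zero =>
    have p1 := hp 0
    have p2 := hp 1
    simp only [zero_add, Nat.reduceAdd] at *
    rw [p2, a1, p1, a0, p0]
    norm_num
  | succ n ih =>
    obtain ⟨i0, i1, i2⟩ := ih
    refine ⟨i1, i2, ?_⟩
    have r2 := hp (n + 1)
    have r3 := hp (n + 2)
    have ra := ha n
    simp only [add_assoc, Nat.reduceAdd] at *
    have key : blockSum s 0 (lucasOdd (n + 3)) =
        4 * blockSum s 0 (lucasOdd (n + 1)) + blockSum s 0 (lucasOdd n) - 4 := by
      linarith
    have one : (1 : ℝ) ≤ (9 / 4) ^ n := one_le_pow₀ (by norm_num)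
    rw [key]
    rw [abs_le] at *
    rw [pow_succ] at i1
    rw [pow_add]
    constructor <;> linarith

lemma abs_blockSum_interval_le (hs : PhiSign s) (n : ℕ) :
    |blockSum s (lucasOdd n) (lucasEven n)| ≤ 17 * (9 / 4) ^ n := by
  have hp := hs.selfSimilar.blockSum_lucasOdd_succ n
  have h0 := hs.abs_blockSum_lucasOdd_le n
  have h1 := hs.abs_blockSum_lucasOdd_le (n + 1)
  rw [abs_le] at *
  rw [pow_succ] at h1
  constructor <;> linarith

lemma tendsto_mean (hs : PhiSign s) :
    Filter.Tendsto (fun x : ℕ => blockSum s 0 x / x) Filter.atTop (nhds 0) := by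
  obtain ⟨D, hD⟩ := hs.selfSimilar.exists_bound (r := 9 / 4) (K := 17) (by norm_num)
    (fun n => (hs.abs_blockSum_lucasOdd_le n).trans (by gcongr; norm_num))
    hs.abs_blockSum_interval_le
  exact tendsto_div_of_bound hD

/-- The mean of `s N * s (N + 1)`. -/
noncomputable def corr : ℝ := 2 * Real.sqrt 5 / 5 - 1

/-- The centred product of consecutive signs. -/
noncomputable def pairing (s : ℕ → ℝ) (N : ℕ) : ℝ := s N * s (N + 1) - corr

lemma selfSimilar_pairing (hs : PhiSign s) : SelfSimilar (pairing s) 1 where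
  sign := by simp
  bound N := by
    have h1 : |s N * s (N + 1)| ≤ 1 := by rw [abs_mul, hs.abs_eq, hs.abs_eq, one_mul]
    have h2 : |corr| ≤ 1 := by
      have h5 : Real.sqrt 5 ≤ 5 / 2 := Real.sqrt_le_iff.2 (by norm_num)
      have h5' := Real.sqrt_nonneg 5
      rw [corr, abs_le]
      constructor <;> linarith
    have := abs_sub (s N * s (N + 1)) corr
    rw [pairing]
    linarith
  even n j hj := by
    rw [pairing, hs.even n j hj.le, add_assoc, hs.even n (j + 1) hj, pairing]
  left n j h0 hj := by
    simp only [pairing, add_assoc]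
    rw [hs.left n j h0 (by omega), hs.left n (j + 1) (by omega) hj]
    ring
  middle n j hj := by
    rw [pairing, hs.middle n j hj.le, add_assoc, hs.middle n (j + 1) hj, pairing]
  right n j h0 hj := by
    rw [pairing, add_assoc _ j 1, hs.right n j h0 (by omega), hs.right n (j + 1) (by omega) hj]
    simp only [pairing, add_assoc]
    ring

/-- The first and the last sign strictly between consecutive Lucas numbers agree. -/
lemma first_eq_last (hs : PhiSign s) (n : ℕ) :
    s (lucasOdd n + 1) = s (lucasOdd n + (lucasEven n - 1)) := by
  induction n with
  | zero => rfl
  | succ n ih =>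
    have h2 := two_le_lucasEven n
    have h : lucasOdd (n + 1) + (lucasEven (n + 1) - 1) =
        lucasOdd (n + 1) + lucasOdd n + (lucasEven n - 1) := by
      rw [lucasEven_succ]; omega
    rw [h, hs.left n 1 one_pos (by omega), hs.right n _ (by omega) (by omega), ih]

lemma blockSum_pairing_interval (hs : PhiSign s) (n : ℕ) :
    blockSum (pairing s) (lucasOdd (n + 2)) (lucasEven (n + 2)) =
      2 * blockSum (pairing s) (lucasOdd (n + 1)) (lucasEven (n + 1)) +
        blockSum (pairing s) 0 (lucasOdd n) := by
  have hm := two_le_lucasEven (n + 1)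
  have fl := hs.first_eq_last (n + 1)
  have last (a : ℕ) : a + (lucasEven (n + 1) - 1) + 1 = a + lucasEven (n + 1) := by omega
  have hv : s (lucasOdd (n + 1) + lucasEven (n + 1)) = 1 := by
    rw [add_comm, ← lucasEven_succ, hs.even_eq_one]
  have hl : s (lucasOdd (n + 2) + lucasEven (n + 1)) = 1 := by
    simpa [hs.zero] using hs.middle n 0 (Nat.zero_le _)
  have hr : s (lucasOdd (n + 2) + lucasOdd (n + 1) + lucasEven (n + 1)) = 1 := by
    rw [show lucasOdd (n + 2) + lucasOdd (n + 1) + lucasEven (n + 1) = lucasEven (n + 3) by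
      rw [lucasEven_succ (n + 2), lucasEven_succ (n + 1)]; ring]
    exact hs.even_eq_one (n + 2)
  have h1 : blockSum (pairing s) (lucasOdd (n + 2)) (lucasEven (n + 1)) =
      blockSum (pairing s) (lucasOdd (n + 1)) (lucasEven (n + 1)) := by
    refine sum_range_eq_of_interior hm (fun j h0 hj => ?_) ?_
    · rw [hs.selfSimilar_pairing.left (n + 1) j h0 hj, one_mul]
    · simp only [pairing, add_zero, last, hl, hv, hs.odd, fl,
        hs.left (n + 1) 1 one_pos (by omega),
        hs.left (n + 1) (lucasEven (n + 1) - 1) (by omega) (by omega)]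
      ring
  have h2 : blockSum (pairing s) (lucasOdd (n + 2) + lucasOdd (n + 1)) (lucasEven (n + 1)) =
      blockSum (pairing s) (lucasOdd (n + 1)) (lucasEven (n + 1)) := by
    refine sum_range_eq_of_interior hm (fun j h0 hj => ?_) ?_
    · rw [hs.selfSimilar_pairing.right (n + 1) j h0 hj, one_mul]
    · simp only [pairing, add_zero, last, hr, hv, hs.odd, hs.odd_add_odd, fl,
        hs.right (n + 1) 1 one_pos (by omega),
        hs.right (n + 1) (lucasEven (n + 1) - 1) (by omega) (by omega)]
      ring
  rw [hs.selfSimilar_pairing.blockSum_interval_succ, h1, h2]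
  ring

/-- Closed forms for the sums of `pairing s` over Lucas intervals. -/
lemma blockSum_pairing_eq (hs : PhiSign s) (n : ℕ) :
    blockSum (pairing s) 0 (lucasOdd n) =
      -2 + (2 - 2 * Real.sqrt 5 / 5) * ((3 - Real.sqrt 5) / 2) ^ n ∧
    blockSum (pairing s) (lucasOdd n) (lucasEven n) =
      2 - 4 * Real.sqrt 5 / 5 * ((3 - Real.sqrt 5) / 2) ^ n := by
  have hp := hs.selfSimilar_pairing.blockSum_lucasOdd_succ
  have ha := hs.blockSum_pairing_interval
  obtain ⟨h3, h4, h5, h6, h7⟩ := hs.initial_values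
  have h55 : Real.sqrt 5 ^ 2 = 5 := Real.sq_sqrt (by norm_num)
  have p0 : blockSum (pairing s) 0 (lucasOdd 0) = -1 - corr := by
    rw [lucasOdd_zero]
    simp [blockSum, pairing, hs.zero, hs.one]
  have a0 : blockSum (pairing s) (lucasOdd 0) (lucasEven 0) = -2 * corr := by
    rw [lucasOdd_zero, lucasEven_zero]
    simp [blockSum, Finset.sum_range_succ, pairing, hs.one, hs.two, h3]
  have a1 : blockSum (pairing s) (lucasOdd 1) (lucasEven 1) = 1 - 3 * corr := by
    rw [show lucasOdd 1 = 4 from rfl, show lucasEven 1 = 3 from rfl]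
    simp [blockSum, Finset.sum_range_succ, pairing, h4, h5, h6, h7]
  set t := Real.sqrt 5 with ht
  have hc : corr = 2 * t / 5 - 1 := rfl
  rw [hc] at p0 a0 a1
  suffices h : blockSum (pairing s) 0 (lucasOdd n) = -2 + (2 - 2 * t / 5) * ((3 - t) / 2) ^ n ∧
      blockSum (pairing s) (lucasOdd n) (lucasEven n) =
        2 - 4 * t / 5 * ((3 - t) / 2) ^ n ∧
      blockSum (pairing s) (lucasOdd (n + 1)) (lucasEven (n + 1)) =
        2 - 4 * t / 5 * ((3 - t) / 2) ^ (n + 1) from ⟨h.1, h.2.1⟩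
  induction n with
  | zero =>
    refine ⟨?_, ?_, ?_⟩
    · rw [p0]; ring
    · rw [a0]; ring
    · rw [zero_add, a1]; linear_combination (2 / 5) * -h55
  | succ n ih =>
    obtain ⟨i1, i2, i3⟩ := ih
    refine ⟨?_, i3, ?_⟩
    · rw [hp, i1, i2, pow_succ]
      linear_combination (-1 / 5) * ((3 - t) / 2) ^ n * h55
    · rw [ha, i1, i3, pow_succ, pow_succ]
      linear_combination ((t - 2) / 5) * ((3 - t) / 2) ^ n * h55

lemma tendsto_pairing (hs : PhiSign s) :
    Filter.Tendsto (fun x : ℕ => blockSum (pairing s) 0 x / x) Filter.atTop (nhds 0) := by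
  have h5 : Real.sqrt 5 ≤ 5 / 2 := Real.sqrt_le_iff.2 (by norm_num)
  have h5' := Real.sqrt_nonneg 5
  have hμ (n : ℕ) : ((3 - Real.sqrt 5) / 2) ^ n ≤ (9 / 4) ^ n ∧
      0 ≤ ((3 - Real.sqrt 5) / 2) ^ n :=
    ⟨pow_le_pow_left₀ (by linarith) (by linarith) n, pow_nonneg (by linarith) n⟩
  have one (n : ℕ) : (1 : ℝ) ≤ (9 / 4) ^ n := one_le_pow₀ (by norm_num)
  obtain ⟨D, hD⟩ := hs.selfSimilar_pairing.exists_bound (r := 9 / 4) (K := 6) (by norm_num)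
    (fun n => by
      have h1 := one n
      obtain ⟨h2, h3⟩ := hμ n
      rw [(hs.blockSum_pairing_eq n).1, abs_le]
      constructor <;> nlinarith)
    (fun n => by
      have h1 := one n
      obtain ⟨h2, h3⟩ := hμ n
      rw [(hs.blockSum_pairing_eq n).2, abs_le]
      constructor <;> nlinarith)
  exact tendsto_div_of_bound hD

lemma tendsto_pair_mean (hs : PhiSign s) {ε : ℝ} (hε : |ε| = 1) :
    Filter.Tendsto
      (fun x : ℕ => (∑ N ∈ Finset.range x, (1 + ε * s N) * (1 + ε * s (N + 1)) / 4) / x)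
      Filter.atTop (nhds (Real.sqrt 5 / 10)) := by
  have hε2 : ε * ε = 1 := by rw [← abs_mul_abs_self, hε, one_mul]
  have hb : Filter.Tendsto (fun x : ℕ => (s x - 1) / x) Filter.atTop (nhds 0) := by
    refine tendsto_div_of_bound (D := 2) fun n x _ => ?_
    have h1 : (1 : ℝ) ≤ (9 / 4) ^ n := one_le_pow₀ (by norm_num)
    have h2 := abs_le.1 (hs.abs_eq x).le
    rw [abs_le]
    constructor <;> linarith
  have hlim := ((((hs.tendsto_mean.const_mul (2 * ε)).add (hb.const_mul ε)).add
    hs.tendsto_pairing).div_const 4).const_add (Real.sqrt 5 / 10)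
  simp only [mul_zero, add_zero, zero_div] at hlim
  refine hlim.congr' ?_
  filter_upwards [Filter.eventually_gt_atTop 0] with x hx
  have hx0 : (x : ℝ) ≠ 0 := by exact_mod_cast hx.ne'
  have hsum : ∀ y : ℕ, ∑ N ∈ Finset.range y, (1 + ε * s N) * (1 + ε * s (N + 1)) / 4 =
      Real.sqrt 5 / 10 * y +
        (2 * ε * blockSum s 0 y + ε * (s y - 1) + blockSum (pairing s) 0 y) / 4 := by
    intro y
    induction y with
    | zero => simp [blockSum, hs.zero]
    | succ y ih =>
      rw [Finset.sum_range_succ, ih]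
      simp only [blockSum, Finset.sum_range_succ, zero_add, pairing, corr]
      push_cast
      linear_combination (s y * s (y + 1) / 4) * hε2
  rw [hsum]
  field_simp

end PhiSign

/-- The words 00 and 11 each have frequency √5/10 in the sequence `T`. -/
theorem freq_00_11 (T : ℕ → ℕ)
    (hT : ∀ (N : ℕ) (d : ℤ → ℕ), IsBasePhi N d → T N = digitSum d % 2) :
    Filter.Tendsto
      (fun x : ℕ => (((Finset.range x).filter fun N => T N = 0 ∧ T (N + 1) = 0).card : ℝ) / x)
      Filter.atTop (nhds (Real.sqrt 5 / 10)) ∧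
    Filter.Tendsto
      (fun x : ℕ => (((Finset.range x).filter fun N => T N = 1 ∧ T (N + 1) = 1).card : ℝ) / x)
      Filter.atTop (nhds (Real.sqrt 5 / 10)) := by
  have hs := phiSign_of_parity hT
  have hlt := parity_lt_two hT
  have count (b : ℕ) (hb : b < 2) (x : ℕ) :
      (((Finset.range x).filter fun N => T N = b ∧ T (N + 1) = b).card : ℝ) =
        ∑ N ∈ Finset.range x,
          (1 + (-1) ^ b * (-1 : ℝ) ^ T N) * (1 + (-1) ^ b * (-1 : ℝ) ^ T (N + 1)) / 4 := by
    rw [Finset.natCast_card_filter]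
    refine Finset.sum_congr rfl fun N _ => ?_
    have h1 := hlt N
    have h2 := hlt (N + 1)
    generalize T N = u at *
    generalize T (N + 1) = v at *
    interval_cases b <;> interval_cases u <;> interval_cases v <;> norm_num
  constructor
  · refine (hs.tendsto_pair_mean (ε := (-1) ^ 0) (by simp)).congr fun x => ?_
    rw [count 0 (by norm_num)]
  · refine (hs.tendsto_pair_mean (ε := (-1) ^ 1) (by simp)).congr fun x => ?_
    rw [count 1 (by norm_num)]
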